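/- arXiv:q-alg/9703003 — 2 statements merged into one kernel-verified Lean document; each statement's English description precedes it below -/
import Mathlib

section
/- Let $D$ be a division ring, $q$ a nonzero central element of $D$, and $n \ge 2$. Call a matrix $z = (z_{ij})_{1\le i,j\le n}$ over $D$ a quantum matrix (for the parameter $q$) if its entries satisfy the following relations $\mathcal{R}el_q$: (row relations) $z_{il} z_{ik} = q\, z_{ik} z_{il}$ for all $i$ and all $k<l$; (column relations) $z_{jk} z_{ik} = q\, z_{ik} z_{jk}$ for all $k$ and all $i<j$; (secondary diagonal relations) $z_{il} z_{jk} = z_{jk} z_{il}$ for all $i<j$ and $k<l$; (main diagonal relations) $z_{ik} z_{jl} - z_{jl} z_{ik} = (q^{-1}-q)\, z_{il} z_{jk}$ for all $i<j$ and $k<l$. Let $z$ be a quantum matrix over $D$ with $z_{11} \ne 0$. Define the row-reduced matrix $z'$ by $z'_{1j} = z_{1j}$ for all $j$, $z'_{i1} = 0$ for $i \ge 2$, and $z'_{ij} = z_{ij} - z_{i1} z_{11}^{-1} z_{1j}$ for $i,j \ge 2$. Then $z'$ is again a quantum matrix for the same parameter $q$: its entries satisfy all the relations $\mathcal{R}el_q$.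 -/
/-- The relations `Rel_q` of `M_q(n)` for an `n × n` matrix `z` over a division ring:
row, column, secondary diagonal and main diagonal relations. -/
def IsQuantumMatrix {D : Type*} [DivisionRing D] (q : D) {n : ℕ}
    (z : Matrix (Fin n) (Fin n) D) : Prop :=
  (∀ i k l : Fin n, k < l → z i l * z i k = q * (z i k * z i l)) ∧
  (∀ i j k : Fin n, i < j → z j k * z i k = q * (z i k * z j k)) ∧
  (∀ i j k l : Fin n, i < j → k < l → z i l * z j k = z j k * z i l) ∧
  (∀ i j k l : Fin n, i < j → k < l →
    z i k * z j l - z j l * z i k = (q⁻¹ - q) * (z i l * z j k))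

/-- The matrix obtained by clearing the first column below the pivot `z 0 0`:
the first row is kept, the other entries of the first column become `0`, and the entry
`(i, j)` with `i, j ≠ 0` becomes `z i j - z i 0 * (z 0 0)⁻¹ * z 0 j`. -/
def rowReduce {D : Type*} [DivisionRing D] {n : ℕ}
    (z : Matrix (Fin (n + 1)) (Fin (n + 1)) D) : Matrix (Fin (n + 1)) (Fin (n + 1)) D :=
  Matrix.of fun i j =>
    if i = 0 then z 0 j
    else if j = 0 then 0
    else z i j - z i 0 * (z 0 0)⁻¹ * z 0 j

section Exchange

variable {F D : Type*} [Field F] [DivisionRing D] [Algebra F D] {q : F}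

theorem mul_mul_of_mul_eq {x y t : D} (h : x * y = t) (w : D) : x * (y * w) = t * w := by
  rw [← mul_assoc, h]

theorem mul_inv_of_q_commute {a x : D} (hq : q ≠ 0) (ha : a ≠ 0)
    (h : x * a = q • (a * x)) : x * a⁻¹ = q⁻¹ • (a⁻¹ * x) := by
  have h' : a⁻¹ * x = q • (x * a⁻¹) := by
    calc a⁻¹ * x = a⁻¹ * (x * a) * a⁻¹ := by simp [mul_assoc, ha]
      _ = q • (x * a⁻¹) := by
        rw [h, mul_smul_comm, smul_mul_assoc, ← mul_assoc, inv_mul_cancel₀ ha, one_mul]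
  rw [h', smul_smul, inv_mul_cancel₀ hq, one_smul]

/-- Moving the inverse of the pivot `a` past the entry `d` diagonally opposite to it. -/
theorem mul_inv_of_main_diagonal {a b c d : D} (hq : q ≠ 0) (ha : a ≠ 0)
    (hb : b * a = q • (a * b)) (hc : c * a = q • (a * c))
    (hd : d * a = a * d - (q⁻¹ - q) • (b * c)) :
    d * a⁻¹ = a⁻¹ * d + ((q⁻¹ - q) * q⁻¹ * q⁻¹) • (a⁻¹ * (a⁻¹ * (b * c))) := by
  have hb' := mul_inv_of_q_commute hq ha hb
  have hc' := mul_inv_of_q_commute hq ha hc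
  have h1 : a⁻¹ * (d * a) * a⁻¹ = a⁻¹ * d := by simp [mul_assoc, ha]
  have h2 : a⁻¹ * (a * d) * a⁻¹ = d * a⁻¹ := by simp [ha]
  rw [hd, mul_sub, sub_mul, h2, sub_eq_iff_eq_add] at h1
  rw [h1]
  simp only [mul_assoc, smul_mul_assoc, mul_smul_comm, hc', mul_mul_of_mul_eq hb', smul_smul]

end Exchange

/-- The `(i, j)` entry of the Schur complement of the pivot `z 0 0`. -/
def schurEntry {D : Type*} [DivisionRing D] {n : ℕ} (z : Matrix (Fin (n + 1)) (Fin (n + 1)) D)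
    (i j : Fin (n + 1)) : D :=
  z i j - z i 0 * (z 0 0)⁻¹ * z 0 j

/-- The relations `Rel_q`, oriented as rewriting rules with coefficients in a central field. -/
structure IsQuantumExchange {F D : Type*} [Field F] [DivisionRing D] [Algebra F D] (q : F) {n : ℕ}
    (z : Matrix (Fin n) (Fin n) D) : Prop where
  row : ∀ i k l : Fin n, k < l → z i l * z i k = q • (z i k * z i l)
  col : ∀ i j k : Fin n, i < j → z j k * z i k = q • (z i k * z j k)
  anti : ∀ i j k l : Fin n, i < j → k < l → z j k * z i l = z i l * z j k
  diag : ∀ i j k l : Fin n, i < j → k < l →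
    z j l * z i k = z i k * z j l - (q⁻¹ - q) • (z i l * z j k)

theorem isQuantumMatrix_iff_exchange {D : Type*} [DivisionRing D] (q : Subring.center D)
    {n : ℕ} (z : Matrix (Fin n) (Fin n) D) :
    IsQuantumMatrix (q : D) z ↔ IsQuantumExchange q z := by
  have hs : ∀ x : D, (q⁻¹ - q) • x = ((q : D)⁻¹ - q) * x := fun x => by
    rw [Subring.smul_def]; simp
  constructor
  · rintro ⟨h1, h2, h3, h4⟩
    refine ⟨h1, h2, fun i j k l hij hkl => (h3 i j k l hij hkl).symm,
      fun i j k l hij hkl => ?_⟩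
    rw [hs, ← h4 i j k l hij hkl, sub_sub_cancel]
  · rintro ⟨h1, h2, h3, h4⟩
    refine ⟨h1, h2, fun i j k l hij hkl => (h3 i j k l hij hkl).symm,
      fun i j k l hij hkl => ?_⟩
    rw [← hs, h4 i j k l hij hkl, sub_sub_cancel]

namespace IsQuantumExchange

variable {F D : Type*} [Field F] [DivisionRing D] [Algebra F D] {q : F} {n : ℕ}
  {z : Matrix (Fin (n + 1)) (Fin (n + 1)) D}

theorem row_inv (h : IsQuantumExchange q z) (hq : q ≠ 0) (ha : z 0 0 ≠ 0) {k : Fin (n + 1)}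
    (hk : 0 < k) : z 0 k * (z 0 0)⁻¹ = q⁻¹ • ((z 0 0)⁻¹ * z 0 k) :=
  mul_inv_of_q_commute hq ha (h.row 0 0 k hk)

theorem col_inv (h : IsQuantumExchange q z) (hq : q ≠ 0) (ha : z 0 0 ≠ 0) {i : Fin (n + 1)}
    (hi : 0 < i) : z i 0 * (z 0 0)⁻¹ = q⁻¹ • ((z 0 0)⁻¹ * z i 0) :=
  mul_inv_of_q_commute hq ha (h.col 0 i 0 hi)

theorem diag_inv (h : IsQuantumExchange q z) (hq : q ≠ 0) (ha : z 0 0 ≠ 0) {i k : Fin (n + 1)}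
    (hi : 0 < i) (hk : 0 < k) : z i k * (z 0 0)⁻¹ = (z 0 0)⁻¹ * z i k +
      ((q⁻¹ - q) * q⁻¹ * q⁻¹) • ((z 0 0)⁻¹ * ((z 0 0)⁻¹ * (z 0 k * z i 0))) :=
  mul_inv_of_main_diagonal hq ha (h.row 0 0 k hk) (h.col 0 i 0 hi) (h.diag 0 i 0 k hi hk)

/-- The coefficient `1` keeps `simp` from treating this rule as a permutation lemma. -/
theorem anti_smul (h : IsQuantumExchange q z) {i j k l : Fin (n + 1)} (hij : i < j)
    (hkl : k < l) : z j k * z i l = (1 : F) • (z i l * z j k) := by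
  rw [one_smul, h.anti i j k l hij hkl]

theorem schurEntry_eq (h : IsQuantumExchange q z) (hq : q ≠ 0) (ha : z 0 0 ≠ 0)
    {i k : Fin (n + 1)} (hi : 0 < i) (hk : 0 < k) :
    schurEntry z i k = z i k - q⁻¹ • ((z 0 0)⁻¹ * (z 0 k * z i 0)) := by
  rw [schurEntry, h.col_inv hq ha hi, smul_mul_assoc, mul_assoc, h.anti 0 i 0 k hi hk]

/-! In the following proofs, `simp` brings every product into the normal form in which the inverse
of the pivot comes first and the entries follow in row-major order; the coefficients are then
compared in the central field. -/

section Schur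

set_option linter.unusedSimpArgs false
set_option linter.unnecessarySeqFocus false

theorem schurEntry_row (h : IsQuantumExchange q z) (hq : q ≠ 0) (ha : z 0 0 ≠ 0)
    {i k l : Fin (n + 1)} (hi : 0 < i) (hk : 0 < k) (hl : 0 < l)
    (hkl : k < l) :
    schurEntry z i l * schurEntry z i k = q • (schurEntry z i k * schurEntry z i l) := by
  have assoc {x y t : D} (e : x * y = t) := mul_mul_of_mul_eq e
  simp only [h.schurEntry_eq hq ha, hi, hk, hl, hkl, mul_sub, sub_mul, mul_add, add_mul, smul_sub,
    smul_add, mul_assoc, smul_mul_assoc, mul_smul_comm, smul_smul,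
    h.row, h.col, h.anti_smul, h.diag, h.row_inv hq ha, h.col_inv hq ha, h.diag_inv hq ha,
    assoc (h.row _ _ _ _), assoc (h.col _ _ _ _), assoc (h.anti_smul _ _),
    assoc (h.diag _ _ _ _ _ _), assoc (h.row_inv hq ha _), assoc (h.col_inv hq ha _),
    assoc (h.diag_inv hq ha _ _)]
  match_scalars <;> field_simp <;> ring

theorem schurEntry_col (h : IsQuantumExchange q z) (hq : q ≠ 0) (ha : z 0 0 ≠ 0)
    {i j k : Fin (n + 1)} (hi : 0 < i) (hj : 0 < j) (hk : 0 < k)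
    (hij : i < j) :
    schurEntry z j k * schurEntry z i k = q • (schurEntry z i k * schurEntry z j k) := by
  have assoc {x y t : D} (e : x * y = t) := mul_mul_of_mul_eq e
  simp only [h.schurEntry_eq hq ha, hi, hj, hk, hij, mul_sub, sub_mul, mul_add, add_mul, smul_sub,
    smul_add, mul_assoc, smul_mul_assoc, mul_smul_comm, smul_smul,
    h.row, h.col, h.anti_smul, h.diag, h.row_inv hq ha, h.col_inv hq ha, h.diag_inv hq ha,
    assoc (h.row _ _ _ _), assoc (h.col _ _ _ _), assoc (h.anti_smul _ _),
    assoc (h.diag _ _ _ _ _ _), assoc (h.row_inv hq ha _), assoc (h.col_inv hq ha _),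
    assoc (h.diag_inv hq ha _ _)]
  match_scalars <;> field_simp <;> ring

theorem schurEntry_anti (h : IsQuantumExchange q z) (hq : q ≠ 0) (ha : z 0 0 ≠ 0)
    {i j k l : Fin (n + 1)} (hi : 0 < i) (hj : 0 < j) (hk : 0 < k) (hl : 0 < l)
    (hij : i < j) (hkl : k < l) :
    schurEntry z j k * schurEntry z i l = schurEntry z i l * schurEntry z j k := by
  have assoc {x y t : D} (e : x * y = t) := mul_mul_of_mul_eq e
  simp only [h.schurEntry_eq hq ha, hi, hj, hk, hl, hij, hkl, mul_sub, sub_mul,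
    mul_add, add_mul, smul_sub,
    smul_add, mul_assoc, smul_mul_assoc, mul_smul_comm, smul_smul,
    h.row, h.col, h.anti_smul, h.diag, h.row_inv hq ha, h.col_inv hq ha, h.diag_inv hq ha,
    assoc (h.row _ _ _ _), assoc (h.col _ _ _ _), assoc (h.anti_smul _ _),
    assoc (h.diag _ _ _ _ _ _), assoc (h.row_inv hq ha _), assoc (h.col_inv hq ha _),
    assoc (h.diag_inv hq ha _ _)]
  match_scalars <;> field_simp

theorem schurEntry_diag (h : IsQuantumExchange q z) (hq : q ≠ 0) (ha : z 0 0 ≠ 0)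
    {i j k l : Fin (n + 1)} (hi : 0 < i) (hj : 0 < j) (hk : 0 < k) (hl : 0 < l)
    (hij : i < j) (hkl : k < l) :
    schurEntry z j l * schurEntry z i k = schurEntry z i k * schurEntry z j l -
      (q⁻¹ - q) • (schurEntry z i l * schurEntry z j k) := by
  have assoc {x y t : D} (e : x * y = t) := mul_mul_of_mul_eq e
  simp only [h.schurEntry_eq hq ha, hi, hj, hk, hl, hij, hkl, mul_sub, sub_mul,
    mul_add, add_mul, smul_sub,
    smul_add, mul_assoc, smul_mul_assoc, mul_smul_comm, smul_smul,
    h.row, h.col, h.anti_smul, h.diag, h.row_inv hq ha, h.col_inv hq ha, h.diag_inv hq ha,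
    assoc (h.row _ _ _ _), assoc (h.col _ _ _ _), assoc (h.anti_smul _ _),
    assoc (h.diag _ _ _ _ _ _), assoc (h.row_inv hq ha _), assoc (h.col_inv hq ha _),
    assoc (h.diag_inv hq ha _ _)]
  match_scalars <;> field_simp <;> ring

theorem schurEntry_mul_pivot (h : IsQuantumExchange q z) (hq : q ≠ 0) (ha : z 0 0 ≠ 0)
    {j l : Fin (n + 1)} (hj : 0 < j) (hl : 0 < l) :
    schurEntry z j l * z 0 0 = z 0 0 * schurEntry z j l := by
  have assoc {x y t : D} (e : x * y = t) := mul_mul_of_mul_eq e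
  simp only [h.schurEntry_eq hq ha, hj, hl, mul_sub, sub_mul, mul_add, add_mul, smul_sub,
    smul_add, mul_assoc, smul_mul_assoc, mul_smul_comm, smul_smul,
    mul_inv_cancel_left₀ ha, inv_mul_cancel_left₀ ha,
    h.row, h.col, h.anti_smul, h.diag, h.row_inv hq ha, h.col_inv hq ha, h.diag_inv hq ha,
    assoc (h.row _ _ _ _), assoc (h.col _ _ _ _), assoc (h.anti_smul _ _),
    assoc (h.diag _ _ _ _ _ _), assoc (h.row_inv hq ha _), assoc (h.col_inv hq ha _),
    assoc (h.diag_inv hq ha _ _)]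
  match_scalars <;> field_simp <;> ring

theorem schurEntry_mul_top (h : IsQuantumExchange q z) (hq : q ≠ 0) (ha : z 0 0 ≠ 0)
    {j k : Fin (n + 1)} (hj : 0 < j) (hk : 0 < k) :
    schurEntry z j k * z 0 k = q • (z 0 k * schurEntry z j k) := by
  have assoc {x y t : D} (e : x * y = t) := mul_mul_of_mul_eq e
  simp only [h.schurEntry_eq hq ha, hj, hk, mul_sub, sub_mul, mul_add, add_mul, smul_sub,
    smul_add, mul_assoc, smul_mul_assoc, mul_smul_comm, smul_smul,
    h.row, h.col, h.anti_smul, h.diag, h.row_inv hq ha, h.col_inv hq ha, h.diag_inv hq ha,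
    assoc (h.row _ _ _ _), assoc (h.col _ _ _ _), assoc (h.anti_smul _ _),
    assoc (h.diag _ _ _ _ _ _), assoc (h.row_inv hq ha _), assoc (h.col_inv hq ha _),
    assoc (h.diag_inv hq ha _ _)]
  match_scalars <;> field_simp

theorem schurEntry_mul_top_right (h : IsQuantumExchange q z) (hq : q ≠ 0) (ha : z 0 0 ≠ 0)
    {j k l : Fin (n + 1)} (hj : 0 < j) (hk : 0 < k) (hl : 0 < l)
    (hkl : k < l) :
    schurEntry z j k * z 0 l = z 0 l * schurEntry z j k := by
  have assoc {x y t : D} (e : x * y = t) := mul_mul_of_mul_eq e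
  simp only [h.schurEntry_eq hq ha, hj, hk, hl, hkl, mul_sub, sub_mul, mul_add, add_mul, smul_sub,
    smul_add, mul_assoc, smul_mul_assoc, mul_smul_comm, smul_smul,
    h.row, h.col, h.anti_smul, h.diag, h.row_inv hq ha, h.col_inv hq ha, h.diag_inv hq ha,
    assoc (h.row _ _ _ _), assoc (h.col _ _ _ _), assoc (h.anti_smul _ _),
    assoc (h.diag _ _ _ _ _ _), assoc (h.row_inv hq ha _), assoc (h.col_inv hq ha _),
    assoc (h.diag_inv hq ha _ _)]
  match_scalars <;> field_simp

theorem schurEntry_mul_top_left (h : IsQuantumExchange q z) (hq : q ≠ 0) (ha : z 0 0 ≠ 0)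
    {j k l : Fin (n + 1)} (hj : 0 < j) (hk : 0 < k) (hl : 0 < l)
    (hkl : k < l) :
    schurEntry z j l * z 0 k =
      z 0 k * schurEntry z j l - (q⁻¹ - q) • (z 0 l * schurEntry z j k) := by
  have assoc {x y t : D} (e : x * y = t) := mul_mul_of_mul_eq e
  simp only [h.schurEntry_eq hq ha, hj, hk, hl, hkl, mul_sub, sub_mul, mul_add, add_mul, smul_sub,
    smul_add, mul_assoc, smul_mul_assoc, mul_smul_comm, smul_smul,
    h.row, h.col, h.anti_smul, h.diag, h.row_inv hq ha, h.col_inv hq ha, h.diag_inv hq ha,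
    assoc (h.row _ _ _ _), assoc (h.col _ _ _ _), assoc (h.anti_smul _ _),
    assoc (h.diag _ _ _ _ _ _), assoc (h.row_inv hq ha _), assoc (h.col_inv hq ha _),
    assoc (h.diag_inv hq ha _ _)]
  match_scalars <;> field_simp <;> ring

end Schur

end IsQuantumExchange

/-- Row-reducing a quantum matrix of size `n + 2 ≥ 2` over a division ring gives a quantum
matrix for the same parameter `q`. -/
theorem row_reducing_quantum_matrix {D : Type*} [DivisionRing D] (q : D)
    (hq : q ≠ 0) (hqc : q ∈ Subring.center D) (n : ℕ)
    (z : Matrix (Fin (n + 2)) (Fin (n + 2)) D)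
    (hz : IsQuantumMatrix q z) (h11 : z 0 0 ≠ 0) :
    IsQuantumMatrix q (rowReduce z) := by
  lift q to Subring.center D using hqc
  have hq' : q ≠ 0 := fun e => hq (by simp [e])
  rw [isQuantumMatrix_iff_exchange] at hz ⊢
  have top : ∀ j, rowReduce z 0 j = z 0 j := fun j => by simp [rowReduce]
  have left : ∀ i, 0 < i → rowReduce z i 0 = 0 := fun i hi => by simp [rowReduce, hi.ne']
  have schur : ∀ i j, 0 < i → 0 < j → rowReduce z i j = schurEntry z i j := fun i j hi hj => by
    simp [rowReduce, schurEntry, hi.ne', hj.ne']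
  refine ⟨fun i k l hkl => ?_, fun i j k hij => ?_, fun i j k l hij hkl => ?_,
    fun i j k l hij hkl => ?_⟩
  · have hl := (Fin.zero_le k).trans_lt hkl
    rcases (Fin.zero_le i).eq_or_lt with rfl | hi
    · simpa only [top] using hz.row 0 k l hkl
    rcases (Fin.zero_le k).eq_or_lt with rfl | hk
    · simp [left i hi]
    rw [schur i k hi hk, schur i l hi hl]
    exact hz.schurEntry_row hq' h11 hi hk hl hkl
  · have hj := (Fin.zero_le i).trans_lt hij
    rcases (Fin.zero_le k).eq_or_lt with rfl | hk
    · simp [left j hj]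
    rw [schur j k hj hk]
    rcases (Fin.zero_le i).eq_or_lt with rfl | hi
    · rw [top]
      exact hz.schurEntry_mul_top hq' h11 hj hk
    rw [schur i k hi hk]
    exact hz.schurEntry_col hq' h11 hi hj hk hij
  · have hj := (Fin.zero_le i).trans_lt hij
    have hl := (Fin.zero_le k).trans_lt hkl
    rcases (Fin.zero_le k).eq_or_lt with rfl | hk
    · simp [left j hj]
    rw [schur j k hj hk]
    rcases (Fin.zero_le i).eq_or_lt with rfl | hi
    · rw [top]
      exact hz.schurEntry_mul_top_right hq' h11 hj hk hl hkl
    rw [schur i l hi hl]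
    exact hz.schurEntry_anti hq' h11 hi hj hk hl hij hkl
  · have hj := (Fin.zero_le i).trans_lt hij
    have hl := (Fin.zero_le k).trans_lt hkl
    rw [schur j l hj hl]
    rcases (Fin.zero_le i).eq_or_lt with rfl | hi
    · rw [top, top]
      rcases (Fin.zero_le k).eq_or_lt with rfl | hk
      · rw [left j hj, mul_zero, smul_zero, sub_zero]
        exact hz.schurEntry_mul_pivot hq' h11 hj hl
      · rw [schur j k hj hk]
        exact hz.schurEntry_mul_top_left hq' h11 hj hk hl hkl
    rw [schur i l hi hl]
    rcases (Fin.zero_le k).eq_or_lt with rfl | hk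
    · simp [left i hi, left j hj]
    rw [schur i k hi hk, schur j k hj hk]
    exact hz.schurEntry_diag hq' h11 hi hj hk hl hij hkl
end

section
/- Let $D$ be a division ring, $q$ a nonzero central element of $D$, and $n \ge 1$. Let $z = (z_{rs})_{1\le r,s\le n}$ be an $n\times n$ quantum matrix over $D$, i.e. a family of elements of $D$ such that, for all $i<j$ and $k<l$ (and all rows, respectively columns, in the first two relations): - (row relations) $z_{rl} z_{rk} = q\, z_{rk} z_{rl}$ for all $r$; - (column relations) $z_{js} z_{is} = q\, z_{is} z_{js}$ for all $s$; - (secondary diagonal relations) $z_{il} z_{jk} = z_{jk} z_{il}$; - (main diagonal relations) $z_{ik} z_{jl} - z_{jl} z_{ik} = (q^{-1}-q)\, z_{il} z_{jk}$. Assume $z_{11}\neq 0$ and let $1<i<j\le n$ and $1<k<l\le n$. Set $A = z_{ik} - z_{i1} z_{11}^{-1} z_{1k}$, $B = z_{il} - z_{i1} z_{11}^{-1} z_{1l}$, $C = z_{jk} - z_{j1} z_{11}^{-1} z_{1k}$, and $E = z_{jl} - z_{j1} z_{11}^{-1} z_{1l}$. Then $$AE - EA = (q^{-1}-q)\, BC.$$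 (For $n=3$ this concerns $i=k=2$, $j=l=3$.) -/
/-- The entry `z'ᵢⱼ = zᵢⱼ - zᵢ₁ z₁₁⁻¹ z₁ⱼ` (with `i`, `j` not the first index, which is `0` in
`Fin (n + 1)`) of the matrix obtained from `z` by clearing the first column below `z₁₁`. -/
def rowReducedEntry {D : Type*} [DivisionRing D] {n : ℕ}
    (z : Matrix (Fin (n + 1)) (Fin (n + 1)) D) (i j : Fin (n + 1)) : D :=
  z i j - z i 0 * (z 0 0)⁻¹ * z 0 j

/-- A `q`-commutation relation with `a` passes to `a⁻¹`. -/
theorem inv_mul_eq_of_mul_eq {D : Type*} [DivisionRing D] {q a b : D}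
    (hqc : ∀ x : D, q * x = x * q) (ha : a ≠ 0) (h : b * a = q * (a * b)) :
    a⁻¹ * b = q * (b * a⁻¹) := by
  have h' : a⁻¹ * (b * a) * a⁻¹ = a⁻¹ * (q * (a * b)) * a⁻¹ := by rw [h]
  rw [← mul_assoc, mul_assoc _ a, mul_inv_cancel₀ ha, mul_one, ← mul_assoc, ← hqc, mul_assoc q,
    inv_mul_cancel_left₀ ha, mul_assoc] at h'
  exact h'

/-- The commutator with `a⁻¹` in terms of the commutator with `a`. -/
theorem inv_mul_sub_mul_inv {D : Type*} [DivisionRing D] {a : D} (ha : a ≠ 0) (m : D) :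
    a⁻¹ * m - m * a⁻¹ = -(a⁻¹ * (a * m - m * a) * a⁻¹) := by
  rw [mul_sub, inv_mul_cancel_left₀ ha, sub_mul, ← mul_assoc a⁻¹ m a, mul_inv_cancel_right₀ ha,
    neg_sub]

/-- If `c` commutes with `d` and `q`-commutes with `a` and `b`,
then it commutes with `d * a⁻¹ * b`. -/
theorem mul_inv_mul_commute_right {D : Type*} [DivisionRing D] {q a b c d : D} (hq : q ≠ 0)
    (hqc : ∀ x : D, q * x = x * q) (ha : a ≠ 0) (hca : c * a = q * (a * c))
    (hcb : c * b = q * (b * c)) (hcd : c * d = d * c) : Commute (d * a⁻¹ * b) c := by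
  refine mul_left_cancel₀ hq ?_
  calc q * (d * a⁻¹ * b * c) = d * a⁻¹ * (q * (b * c)) := by
        rw [mul_assoc (d * a⁻¹), ← mul_assoc q, hqc, mul_assoc]
    _ = d * (a⁻¹ * c) * b := by rw [← hcb]; simp only [mul_assoc]
    _ = d * q * (c * a⁻¹ * b) := by
        rw [inv_mul_eq_of_mul_eq hqc ha hca]; simp only [mul_assoc]
    _ = q * (c * d * a⁻¹ * b) := by rw [← hqc, hcd]; simp only [mul_assoc]
    _ = q * (c * (d * a⁻¹ * b)) := by simp only [mul_assoc]

/-- If `g` commutes with `b` and `q`-commutes with `a` and `d`,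
then it commutes with `d * a⁻¹ * b`. -/
theorem mul_inv_mul_commute_left {D : Type*} [DivisionRing D] {q a b d g : D}
    (hqc : ∀ x : D, q * x = x * q) (ha : a ≠ 0) (hga : g * a = q * (a * g))
    (hgd : g * d = q * (d * g)) (hbg : b * g = g * b) : Commute (d * a⁻¹ * b) g := by
  change d * a⁻¹ * b * g = g * (d * a⁻¹ * b)
  calc d * a⁻¹ * b * g = d * (a⁻¹ * g) * b := by
        rw [mul_assoc (d * a⁻¹), hbg]; simp only [mul_assoc]
    _ = d * q * (g * a⁻¹ * b) := by
        rw [inv_mul_eq_of_mul_eq hqc ha hga]; simp only [mul_assoc]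
    _ = q * (d * g) * a⁻¹ * b := by rw [← hqc]; simp only [mul_assoc]
    _ = g * (d * a⁻¹ * b) := by rw [← hgd]; simp only [mul_assoc]

section

variable {D : Type*} [DivisionRing D] {q : D} {n : ℕ}
  {z : Matrix (Fin (n + 1)) (Fin (n + 1)) D}

/-- A row-reduced entry commutes with the entries of the first row to its right. -/
theorem IsQuantumMatrix.commute_rowReducedEntry_row (hz : IsQuantumMatrix q z) (hq : q ≠ 0)
    (hqc : ∀ x : D, q * x = x * q) (h11 : z 0 0 ≠ 0) {i k l : Fin (n + 1)}
    (hi : 0 < i) (hk : 0 < k) (hkl : k < l) :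
    Commute (rowReducedEntry z i k) (z 0 l) := by
  obtain ⟨hrow, -, hsec, -⟩ := hz
  exact Commute.sub_left (hsec 0 i k l hi hkl).symm
    (mul_inv_mul_commute_right hq hqc h11 (hrow 0 0 l (hk.trans hkl)) (hrow 0 k l hkl)
      (hsec 0 i 0 l hi (hk.trans hkl)))

/-- A row-reduced entry commutes with the entries of the first column below it. -/
theorem IsQuantumMatrix.commute_rowReducedEntry_col (hz : IsQuantumMatrix q z)
    (hqc : ∀ x : D, q * x = x * q) (h11 : z 0 0 ≠ 0) {i j k : Fin (n + 1)}
    (hi : 0 < i) (hij : i < j) (hk : 0 < k) :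
    Commute (rowReducedEntry z i k) (z j 0) := by
  obtain ⟨-, hcol, hsec, -⟩ := hz
  exact Commute.sub_left (hsec i j 0 k hij hk)
    (mul_inv_mul_commute_left hqc h11 (hcol 0 j 0 (hi.trans hij)) (hcol i j 0 hij)
      (hsec 0 j 0 k (hi.trans hij) hk))

/-- A row-reduced entry commutes with the top left entry. -/
theorem IsQuantumMatrix.commute_rowReducedEntry_zero (hz : IsQuantumMatrix q z) (hq : q ≠ 0)
    (hqc : ∀ x : D, q * x = x * q) (h11 : z 0 0 ≠ 0) {i k : Fin (n + 1)}
    (hi : 0 < i) (hk : 0 < k) :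
    Commute (rowReducedEntry z i k) (z 0 0) := by
  obtain ⟨hrow, hcol, hsec, hmain⟩ := hz
  have hb := hrow 0 0 k hk
  have hd := hcol 0 i 0 hi
  have hbd := hsec 0 i 0 k hi hk
  have hm := hmain 0 i 0 k hi hk
  have hr : z i 0 * (z 0 0)⁻¹ * z 0 k * z 0 0 = q * (z 0 k * z i 0) := by
    rw [mul_assoc, hb, ← mul_assoc, ← hqc, mul_assoc, mul_assoc, inv_mul_cancel_left₀ h11, hbd]
  have hl : z 0 0 * (z i 0 * (z 0 0)⁻¹ * z 0 k) = q⁻¹ * (z 0 k * z i 0) := by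
    have : z 0 0 * z i 0 = q⁻¹ * (z i 0 * z 0 0) := by rw [hd, inv_mul_cancel_left₀ hq]
    rw [← mul_assoc, ← mul_assoc, this, hbd, mul_assoc q⁻¹, mul_inv_cancel_right₀ h11, mul_assoc]
  change (z i k - z i 0 * (z 0 0)⁻¹ * z 0 k) * z 0 0 = z 0 0 * (z i k - z i 0 * (z 0 0)⁻¹ * z 0 k)
  rw [sub_mul, mul_sub, hr, hl, sub_eq_iff_eq_add.mp hm]
  noncomm_ring

end

theorem row_reduced_main_diagonal {D : Type*} [DivisionRing D] (q : D)
    (hq : q ≠ 0) (hqc : ∀ x : D, q * x = x * q) (n : ℕ)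
    (z : Matrix (Fin (n + 1)) (Fin (n + 1)) D) (hz : IsQuantumMatrix q z) (h11 : z 0 0 ≠ 0)
    (i j k l : Fin (n + 1)) (hi : 0 < i) (hij : i < j) (hk : 0 < k) (hkl : k < l) :
    rowReducedEntry z i k * rowReducedEntry z j l -
        rowReducedEntry z j l * rowReducedEntry z i k =
      (q⁻¹ - q) * (rowReducedEntry z i l * rowReducedEntry z j k) := by
  have hA : rowReducedEntry z i k * (z j 0 * (z 0 0)⁻¹ * z 0 l) =
      z j 0 * (z 0 0)⁻¹ * z 0 l * rowReducedEntry z i k :=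
    ((hz.commute_rowReducedEntry_col hqc h11 hi hij hk).mul_right
      (hz.commute_rowReducedEntry_zero hq hqc h11 hi hk).inv_right₀).mul_right
      (hz.commute_rowReducedEntry_row hq hqc h11 hi hk hkl)
  obtain ⟨-, -, -, hmain⟩ := hz
  have hs : ∀ x : D, x * (q⁻¹ - q) = (q⁻¹ - q) * x := fun x =>
    (Commute.sub_left (Commute.inv_left₀ (hqc x)) (hqc x)).eq.symm
  have hs' : ∀ x y : D, x * ((q⁻¹ - q) * y) = (q⁻¹ - q) * (x * y) := fun x y => by
    rw [← mul_assoc, hs, mul_assoc]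
  have he := hmain i j k l hij hkl
  have hb := hmain 0 j k l (hi.trans hij) hkl
  have hd := hmain i j 0 l hij (hk.trans hkl)
  have ha := inv_mul_sub_mul_inv h11 (z j l)
  rw [hmain 0 j 0 l (hi.trans hij) (hk.trans hkl)] at ha
  generalize q⁻¹ - q = s at *
  calc rowReducedEntry z i k * rowReducedEntry z j l -
        rowReducedEntry z j l * rowReducedEntry z i k
      = rowReducedEntry z i k * z j l - z j l * rowReducedEntry z i k := by
        rw [show rowReducedEntry z j l = z j l - z j 0 * (z 0 0)⁻¹ * z 0 l from rfl, mul_sub,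
          sub_mul, hA, sub_sub_sub_cancel_right]
    _ = (z i k * z j l - z j l * z i k)
        - (z i 0 * (z 0 0)⁻¹ * (z 0 k * z j l - z j l * z 0 k)
          + z i 0 * ((z 0 0)⁻¹ * z j l - z j l * (z 0 0)⁻¹) * z 0 k
          + (z i 0 * z j l - z j l * z i 0) * (z 0 0)⁻¹ * z 0 k) := by
        unfold rowReducedEntry; noncomm_ring
    _ = s * (rowReducedEntry z i l * rowReducedEntry z j k) := by
        rw [he, hb, hd, ha]
        simp only [rowReducedEntry, mul_sub, sub_mul, mul_neg, neg_mul, mul_assoc, hs']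
        abel
end
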